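/- The series Σ_{n=1}^∞ κ(n)·a₁²/βⁿ converges; equivalently, the sequence n ↦ κ(n)/βⁿ is summable. (This is the finiteness of the total measure λ_R(R) of the natural-extension domain.) -/

import Mathlib

open MeasureTheory Set

/-- The greedy β-transformation with deleted digit set `{0, a₁, a₂}`:
`T x = βx` on `Δ(0) = [0, a₁/β)`, `T x = βx − a₁` on `Δ(a₁) = [a₁/β, a₂/β)`,
and `T x = βx − a₂` on `Δ(a₂) = [a₂/β, a₁)`. -/
noncomputable def greedyT (β a₁ a₂ : ℝ) (x : ℝ) : ℝ :=
  if x < a₁ / β then β * x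
  else if x < a₂ / β then β * x - a₁
  else β * x - a₂

/-- The interval `Δ(b)` associated to a digit `b ∈ {0, a₁, a₂}`. -/
noncomputable def digitInt (β a₁ a₂ : ℝ) (b : ℝ) : Set ℝ :=
  if b = 0 then Set.Ico 0 (a₁ / β)
  else if b = a₁ then Set.Ico (a₁ / β) (a₂ / β)
  else Set.Ico (a₂ / β) a₁

/-- The fundamental interval `Δ(w) = ⋂_{k < n} T⁻ᵏ Δ(b_k)` of a word
`w = (b₀, …, b_{n−1})`. -/
noncomputable def cyl (β a₁ a₂ : ℝ) (w : List ℝ) : Set ℝ :=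
  ⋂ k ∈ Finset.range w.length,
    (greedyT β a₁ a₂)^[k] ⁻¹' digitInt β a₁ a₂ (w.getD k 0)

/-- `w` is a word over the alphabet `A = {0, a₁, a₂}`. -/
def isWord (a₁ a₂ : ℝ) (w : List ℝ) : Prop := ∀ b ∈ w, b = 0 ∨ b = a₁ ∨ b = a₂

/-- The fundamental interval `Δ(w)` is full: `λ(Δ(w)) = a₁/β^|w|`. -/
def isFull (β a₁ a₂ : ℝ) (w : List ℝ) : Prop :=
  volume (cyl β a₁ a₂ w) = ENNReal.ofReal (a₁ / β ^ w.length)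

/-- Condition (6): `a₁ · max (β−1) 1 < a₂ < a₁ · min 2 β`. -/
def condition6 (β a₁ a₂ : ℝ) : Prop :=
  a₁ * max (β - 1) 1 < a₂ ∧ a₂ < a₁ * min 2 β

/-- `w ∈ Bₙ`: `w` is a word of length `n` over `A` with `λ(Δ(w)) > 0`, `Δ(w)`
non-full, and `Δ(w′)` non-full for every nonempty proper prefix `w′` of `w`. -/
def memB (β a₁ a₂ : ℝ) (n : ℕ) (w : List ℝ) : Prop :=
  w.length = n ∧ isWord a₁ a₂ w ∧ 0 < volume (cyl β a₁ a₂ w) ∧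
    ¬ isFull β a₁ a₂ w ∧
    ∀ w' : List ℝ, w' ≠ [] → w' <+: w → w' ≠ w → ¬ isFull β a₁ a₂ w'

/-- `κ(n)`: the number of elements of `Bₙ`. -/
noncomputable def kappa (β a₁ a₂ : ℝ) (n : ℕ) : ℕ :=
  {w : List ℝ | memB β a₁ a₂ n w}.ncard

/-- Effect of the digit `b` on the length of the (normalised) image interval. -/
noncomputable def stepLen (β a₁ a₂ b t : ℝ) : ℝ :=
  if b = 0 then min (β * t) a₁
  else if b = a₁ then min (β * t - a₁) (a₂ - a₁)
  else min (β * t - a₂) (β * a₁ - a₂)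

/-- Normalised length, for a reversed word. -/
noncomputable def tLen (β a₁ a₂ : ℝ) : List ℝ → ℝ
  | [] => a₁
  | b :: r => stepLen β a₁ a₂ b (tLen β a₁ a₂ r)

open Classical in
/-- Reversed words of length `n` all of whose nonempty prefixes are non-full. -/
noncomputable def levelG (β a₁ a₂ : ℝ) : ℕ → Finset (List ℝ)
  | 0 => {[]}
  | n + 1 => ((levelG β a₁ a₂ n ×ˢ ({0, a₁, a₂} : Finset ℝ)).filter
      (fun p => 0 < tLen β a₁ a₂ (p.2 :: p.1) ∧ tLen β a₁ a₂ (p.2 :: p.1) < a₁)).image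
        (fun p => p.2 :: p.1)

theorem cyl_snoc (β a₁ a₂ : ℝ) (w : List ℝ) (b : ℝ) :
    cyl β a₁ a₂ (w ++ [b]) =
      cyl β a₁ a₂ w ∩ (greedyT β a₁ a₂)^[w.length] ⁻¹' digitInt β a₁ a₂ b := by
  ext x
  simp only [cyl, List.length_append, List.length_singleton, Finset.mem_range, mem_iInter,
    mem_inter_iff]
  constructor
  · intro h
    refine ⟨fun k hk => ?_, ?_⟩
    · have := h k (by omega)
      rwa [List.getD_append _ _ _ _ hk] at this
    · have := h w.length (by omega)
      rw [List.getD_append_right _ _ _ _ le_rfl] at this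
      simpa using this
  · rintro ⟨h1, h2⟩ k hk
    rcases Nat.lt_or_ge k w.length with h | h
    · rw [List.getD_append _ _ _ _ h]
      exact h1 k h
    · obtain rfl : k = w.length := by omega
      rw [List.getD_append_right _ _ _ _ le_rfl]
      simpa using h2

theorem stepLen_le (β a₁ a₂ b t : ℝ) (ha₁ : 0 < a₁)
    (h2 : a₂ < 2 * a₁) (h3 : a₁ * (β - 1) < a₂) : stepLen β a₁ a₂ b t ≤ a₁ := by
  unfold stepLen
  split_ifs
  · exact min_le_right _ _
  · exact (min_le_right _ _).trans (by linarith)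
  · exact (min_le_right _ _).trans (by linarith)

theorem tLen_le (β a₁ a₂ : ℝ) (r : List ℝ) (ha₁ : 0 < a₁)
    (h2 : a₂ < 2 * a₁) (h3 : a₁ * (β - 1) < a₂) : tLen β a₁ a₂ r ≤ a₁ := by
  cases r with
  | nil => exact le_rfl
  | cons b r => exact stepLen_le β a₁ a₂ b _ ha₁ h2 h3

theorem stepLen_pos (β a₁ a₂ b t : ℝ) (hβ1 : 1 < β) (ha₁ : 0 < a₁) (h12 : a₁ < a₂)
    (h : 0 < stepLen β a₁ a₂ b t) : 0 < t := by
  have : 0 < β * t := by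
    unfold stepLen at h
    split_ifs at h <;> have := (lt_min_iff.1 h).1 <;> linarith
  exact pos_of_mul_pos_right this (by linarith)

/-- generic step on intervals -/
theorem ico_step (β c t P l u : ℝ) (hβ : 0 < β) (hP : 0 < P) (hl : 0 ≤ l) :
    {x | x ∈ Ico c (c + t / P) ∧ P * (x - c) ∈ Ico (l / β) (u / β)} =
      Ico (c + l / β / P) (c + l / β / P + min (β * t - l) (u - l) / (P * β)) := by
  ext x
  have e : c + l / β / P + min (β * t - l) (u - l) / (P * β)
      = c + min (β * t) u / (P * β) := by
    rw [min_sub_sub_right]; field_simp; ring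
  rw [e]
  simp only [mem_setOf_eq, mem_Ico, div_le_iff₀ hβ, lt_div_iff₀ hβ]
  have h1 : x < c + t / P ↔ P * (x - c) < t := by
    rw [← sub_lt_iff_lt_add', lt_div_iff₀ hP, mul_comm]
  have h2 : x < c + min (β * t) u / (P * β) ↔ P * (x - c) * β < min (β * t) u := by
    rw [← sub_lt_iff_lt_add', lt_div_iff₀ (by positivity)]
    constructor <;> intro h <;> linarith
  have h3 : c + l / β / P ≤ x ↔ l ≤ P * (x - c) * β := by
    rw [← le_sub_iff_add_le', div_div, div_le_iff₀ (by positivity)]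
    constructor <;> intro h <;> linarith
  rw [h1, h2, h3, lt_min_iff]
  have h4 : P * (x - c) * β < β * t ↔ P * (x - c) < t := by
    rw [mul_comm β t]; exact mul_lt_mul_iff_left₀ hβ
  rw [h4]
  constructor
  · rintro ⟨⟨_, a⟩, b, d⟩; exact ⟨b, a, d⟩
  · rintro ⟨b, a, d⟩
    refine ⟨⟨?_, a⟩, b, d⟩
    have : 0 ≤ (P * β) * (x - c) := by linarith
    have := nonneg_of_mul_nonneg_right this (by positivity)
    linarith

theorem cyl_inv (β a₁ a₂ : ℝ) (hβ1 : 1 < β) (ha₁ : 0 < a₁) (h12 : a₁ < a₂)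
    (h2 : a₂ < 2 * a₁) (h3 : a₁ * (β - 1) < a₂) (r : List ℝ)
    (hw : ∀ b ∈ r, b = 0 ∨ b = a₁ ∨ b = a₂) :
    ∃ c : ℝ, Ico 0 a₁ ∩ cyl β a₁ a₂ r.reverse =
        Ico c (c + tLen β a₁ a₂ r / β ^ r.length) ∧
      ∀ x ∈ Ico 0 a₁ ∩ cyl β a₁ a₂ r.reverse,
        (greedyT β a₁ a₂)^[r.length] x = β ^ r.length * (x - c) := by
  have hβ : 0 < β := by linarith
  induction r with
  | nil =>
    refine ⟨0, ?_, ?_⟩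
    · simp [cyl, tLen]
    · simp
  | cons b r ih =>
    obtain ⟨c, hc, hT⟩ := ih (fun b hb => hw b (List.mem_cons_of_mem _ hb))
    have hb := hw b List.mem_cons_self
    have hP : 0 < β ^ r.length := by positivity
    set P := β ^ r.length with hPdef
    set t := tLen β a₁ a₂ r with ht
    have key : ∀ x, x ∈ Ico 0 a₁ ∩ cyl β a₁ a₂ (b :: r).reverse ↔
        x ∈ Ico c (c + t / P) ∧ P * (x - c) ∈ digitInt β a₁ a₂ b := by
      intro x
      rw [List.reverse_cons, cyl_snoc, ← inter_assoc, List.length_reverse, mem_inter_iff,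
        mem_preimage, ← hc]
      refine and_congr_right fun hx => ?_
      rw [hT x hx]
    have main : ∀ l u : ℝ, 0 ≤ l → digitInt β a₁ a₂ b = Ico (l / β) (u / β) →
        stepLen β a₁ a₂ b t = min (β * t - l) (u - l) →
        (∀ y ∈ Ico (l / β) (u / β), greedyT β a₁ a₂ y = β * y - l) →
        ∃ c : ℝ, Ico 0 a₁ ∩ cyl β a₁ a₂ (b :: r).reverse =
          Ico c (c + tLen β a₁ a₂ (b :: r) / β ^ (b :: r).length) ∧
        ∀ x ∈ Ico 0 a₁ ∩ cyl β a₁ a₂ (b :: r).reverse,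
          (greedyT β a₁ a₂)^[(b :: r).length] x = β ^ (b :: r).length * (x - c) := by
      intro l u hl hd hs hg
      refine ⟨c + l / β / P, ?_, ?_⟩
      · rw [tLen, ← ht, hs, List.length_cons, pow_succ, ← hPdef, ← ico_step β c t P l u hβ hP hl]
        ext x
        rw [key x, hd]; rfl
      · intro x hx
        have hk := (key x).1 hx
        rw [List.length_cons, Function.iterate_succ_apply', hT x (by rw [hc]; exact hk.1),
          hg _ (hd ▸ hk.2), pow_succ, ← hPdef]
        field_simp
        ring
    have hd12 : a₁ / β < a₂ / β := by gcongr
    by_cases hb0 : b = 0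
    · refine main 0 a₁ le_rfl ?_ ?_ ?_
      · simp [digitInt, hb0]
      · simp [stepLen, hb0]
      · intro y hy
        simp [greedyT, hy.2]
    · by_cases hb1 : b = a₁
      · refine main a₁ a₂ ha₁.le ?_ ?_ ?_
        · rw [digitInt, if_neg hb0, if_pos hb1]
        · rw [stepLen, if_neg hb0, if_pos hb1]
        · intro y hy
          rw [greedyT, if_neg (not_lt.2 hy.1), if_pos hy.2]
      · refine main a₂ (β * a₁) (by linarith) ?_ ?_ ?_
        · rw [digitInt, if_neg hb0, if_neg hb1, mul_div_cancel_left₀ _ hβ.ne']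
        · rw [stepLen, if_neg hb0, if_neg hb1]
        · intro y hy
          rw [greedyT, if_neg (by linarith [hy.1]), if_neg (not_lt.2 hy.1)]

theorem cyl_sub (β a₁ a₂ : ℝ) (hβ1 : 1 < β) (ha₁ : 0 < a₁) (h12 : a₁ < a₂)
    (h4 : a₂ < a₁ * β) (w : List ℝ) (hw : w ≠ []) :
    cyl β a₁ a₂ w ⊆ Ico 0 a₁ := by
  have hβ : 0 < β := by linarith
  intro x hx
  have h0 : x ∈ digitInt β a₁ a₂ (w.getD 0 0) := by
    have := mem_iInter₂.1 hx 0 (by simpa [List.length_pos_iff] using hw)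
    simpa using this
  have e1 : a₁ / β < a₂ / β := by gcongr
  have e2 : a₂ / β < a₁ := by rwa [div_lt_iff₀ hβ]
  have e0 : 0 < a₁ / β := by positivity
  unfold digitInt at h0
  split_ifs at h0 <;> exact ⟨by linarith [h0.1], by linarith [h0.2]⟩

theorem vol_cyl (β a₁ a₂ : ℝ) (hβ1 : 1 < β) (ha₁ : 0 < a₁) (h12 : a₁ < a₂)
    (h2 : a₂ < 2 * a₁) (h3 : a₁ * (β - 1) < a₂) (h4 : a₂ < a₁ * β) (r : List ℝ)
    (hr : r ≠ [])
    (hw : ∀ b ∈ r, b = 0 ∨ b = a₁ ∨ b = a₂) :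
    volume (cyl β a₁ a₂ r.reverse) = ENNReal.ofReal (tLen β a₁ a₂ r / β ^ r.length) := by
  obtain ⟨c, hc, -⟩ := cyl_inv β a₁ a₂ hβ1 ha₁ h12 h2 h3 r hw
  rw [inter_eq_right.2 (cyl_sub β a₁ a₂ hβ1 ha₁ h12 h4 _ (by simpa using hr))] at hc
  rw [hc, Real.volume_Ico]
  congr 1; ring

theorem mem_levelG (β a₁ a₂ : ℝ) (hβ1 : 1 < β) (ha₁ : 0 < a₁) (h12 : a₁ < a₂)
    (h2 : a₂ < 2 * a₁) (h3 : a₁ * (β - 1) < a₂) (r : List ℝ)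
    (hw : ∀ b ∈ r, b = 0 ∨ b = a₁ ∨ b = a₂) (hpos : 0 < tLen β a₁ a₂ r)
    (hs : ∀ s, s ≠ [] → s <:+ r → tLen β a₁ a₂ s ≠ a₁) :
    r ∈ levelG β a₁ a₂ r.length := by
  induction r with
  | nil => simp [levelG]
  | cons b r ih =>
    have h := ih (fun b hb => hw b (List.mem_cons_of_mem _ hb))
      (stepLen_pos β a₁ a₂ b _ hβ1 ha₁ h12 hpos)
      (fun s hs1 hs2 => hs s hs1 (hs2.trans (List.suffix_cons b r)))
    rw [List.length_cons, levelG, Finset.mem_image]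
    refine ⟨(r, b), ?_, rfl⟩
    rw [Finset.mem_filter, Finset.mem_product]
    refine ⟨⟨h, ?_⟩, hpos, ?_⟩
    · simpa using hw b List.mem_cons_self
    · exact lt_of_le_of_ne (tLen_le β a₁ a₂ _ ha₁ h2 h3)
        (hs _ (List.cons_ne_nil _ _) List.suffix_rfl)

theorem kappa_le (β a₁ a₂ : ℝ) (hβ1 : 1 < β) (ha₁ : 0 < a₁) (h12 : a₁ < a₂)
    (h2 : a₂ < 2 * a₁) (h3 : a₁ * (β - 1) < a₂) (h4 : a₂ < a₁ * β) (n : ℕ) :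
    kappa β a₁ a₂ (n + 1) ≤ (levelG β a₁ a₂ (n + 1)).card := by
  have hβ : 0 < β := by linarith
  rw [kappa, ← Set.ncard_coe_finset]
  refine Set.ncard_le_ncard_of_injOn List.reverse ?_ (List.reverse_injective.injOn)
    (Finset.finite_toSet _)
  rintro w ⟨hlen, hword, hpos, hnf, hpre⟩
  have hne : w ≠ [] := by rintro rfl; simp at hlen
  have hw : ∀ b ∈ w.reverse, b = 0 ∨ b = a₁ ∨ b = a₂ := by
    intro b hb; exact hword b (by simpa using hb)
  have hv := vol_cyl β a₁ a₂ hβ1 ha₁ h12 h2 h3 h4 w.reverse (by simpa using hne) hw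
  rw [List.reverse_reverse] at hv
  rw [hv, ENNReal.ofReal_pos] at hpos
  have hpos' : 0 < tLen β a₁ a₂ w.reverse := by
    by_contra hcon
    exact absurd hpos (not_lt.2 (div_nonpos_of_nonpos_of_nonneg (not_lt.1 hcon) (by positivity)))
  have := mem_levelG β a₁ a₂ hβ1 ha₁ h12 h2 h3 w.reverse hw hpos' ?_
  · rw [List.length_reverse, hlen] at this
    exact this
  · intro s hs1 hs2 hs3
    have hfull : isFull β a₁ a₂ s.reverse := by
      rw [isFull, vol_cyl β a₁ a₂ hβ1 ha₁ h12 h2 h3 h4 s hs1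
        (fun b hb => hw b (hs2.subset hb)), hs3, List.length_reverse]
    have hp : s.reverse <+: w := by
      have := List.reverse_prefix.2 hs2
      simpa using this
    by_cases he : s.reverse = w
    · exact hnf (he ▸ hfull)
    · exact hpre _ (by simpa using hs1) hp he hfull

theorem node_ineq (β a₁ a₂ t : ℝ) (ha₁ : 0 < a₁) (h12 : a₁ < a₂)
    (ht : t ≤ a₁) (ht0 : 0 < t) (hβ1 : 1 < β) :
    (∑ b ∈ ({0, a₁, a₂} : Finset ℝ),
      if 0 < stepLen β a₁ a₂ b t ∧ stepLen β a₁ a₂ b t < a₁ then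
        1 + stepLen β a₁ a₂ b t / a₁ else 0) ≤ 1 + β * (t / a₁) := by
  have hβ : 0 < β := by linarith
  have e0 : stepLen β a₁ a₂ 0 t = min (β * t) a₁ := by simp [stepLen]
  have e1 : stepLen β a₁ a₂ a₁ t = min (β * t - a₁) (a₂ - a₁) := by
    rw [stepLen, if_neg ha₁.ne', if_pos rfl]
  have e2 : stepLen β a₁ a₂ a₂ t = β * t - a₂ := by
    rw [stepLen, if_neg (by linarith), if_neg h12.ne', min_eq_left]
    have : β * t ≤ β * a₁ := by gcongr
    linarith
  rw [Finset.sum_insert (by simp [ha₁.ne, (ha₁.trans h12).ne]),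
    Finset.sum_insert (by simp [h12.ne]), Finset.sum_singleton, e0, e1, e2, ← mul_div_assoc]
  have hbt : 0 < β * t := by positivity
  generalize β * t = s at *
  have hd : 0 < s / a₁ := by positivity
  rcases lt_or_ge s a₁ with h | h
  · rw [min_eq_left h.le, if_pos ⟨hbt, h⟩, if_neg, if_neg]
    · linarith
    · rintro ⟨h, -⟩; linarith
    · rintro ⟨h, -⟩; have := (lt_min_iff.1 h).1; linarith
  · rw [min_eq_right h, if_neg (by simp)]
    rcases le_or_gt s a₂ with h' | h'
    · rw [min_eq_left (by linarith), if_neg (c := 0 < s - a₂ ∧ _) (by rintro ⟨h, -⟩; linarith)]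
      split_ifs
      · rw [sub_div, div_self ha₁.ne']; linarith
      · linarith
    · rw [min_eq_right (by linarith)]
      have p1 : 0 ≤ (a₂ - a₁) / a₁ := div_nonneg (by linarith) ha₁.le
      have p2 : 0 ≤ (s - a₂) / a₁ := div_nonneg (by linarith) ha₁.le
      have p3 : 1 + (a₂ - a₁) / a₁ + (1 + (s - a₂) / a₁) = 1 + s / a₁ := by field_simp; ring
      split_ifs <;> linarith

theorem level_pos (β a₁ a₂ : ℝ) (ha₁ : 0 < a₁) (n : ℕ) :
    ∀ r ∈ levelG β a₁ a₂ n, 0 < tLen β a₁ a₂ r := by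
  cases n with
  | zero => intro r hr; simp [levelG] at hr; subst hr; exact ha₁
  | succ n =>
    intro r hr
    rw [levelG, Finset.mem_image] at hr
    obtain ⟨p, hp, rfl⟩ := hr
    exact (Finset.mem_filter.1 hp).2.1

theorem level_ineq (β a₁ a₂ : ℝ) (hβ1 : 1 < β) (ha₁ : 0 < a₁) (h12 : a₁ < a₂)
    (h2 : a₂ < 2 * a₁) (h3 : a₁ * (β - 1) < a₂) (n : ℕ) :
    ((levelG β a₁ a₂ (n + 1)).card : ℝ) + ∑ r ∈ levelG β a₁ a₂ (n + 1), tLen β a₁ a₂ r / a₁ ≤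
      (levelG β a₁ a₂ n).card + β * ∑ r ∈ levelG β a₁ a₂ n, tLen β a₁ a₂ r / a₁ := by
  classical
  have e : ∀ m, ∀ q : ℝ, ((levelG β a₁ a₂ m).card : ℝ) +
      q * ∑ r ∈ levelG β a₁ a₂ m, tLen β a₁ a₂ r / a₁ =
      ∑ r ∈ levelG β a₁ a₂ m, (1 + q * (tLen β a₁ a₂ r / a₁)) := by
    intro m q
    rw [Finset.sum_add_distrib, ← Finset.mul_sum]; simp
  have e1 := e (n + 1) 1
  simp only [one_mul] at e1
  rw [e, e1, levelG, Finset.sum_image, Finset.sum_filter, Finset.sum_product]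
  · refine Finset.sum_le_sum fun r hr => ?_
    have := node_ineq β a₁ a₂ (tLen β a₁ a₂ r) ha₁ h12 (tLen_le β a₁ a₂ r ha₁ h2 h3)
      (level_pos β a₁ a₂ ha₁ n r hr) hβ1
    refine le_trans (le_of_eq (Finset.sum_congr rfl fun b _ => ?_)) this
    simp only [tLen]
    by_cases h : 0 < stepLen β a₁ a₂ b (tLen β a₁ a₂ r) ∧ stepLen β a₁ a₂ b (tLen β a₁ a₂ r) < a₁
    · exact (if_pos h).trans (if_pos h).symm
    · exact (if_neg h).trans (if_neg h).symm
  · rintro ⟨a, b⟩ - ⟨c, d⟩ - h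
    simp only [List.cons.injEq] at h
    exact Prod.ext h.2 h.1

/-- The series `Σ_{n≥1} κ(n)·a₁²/βⁿ` converges; equivalently the
sequence `n ↦ κ(n)/βⁿ` is summable. (Finiteness of the total measure
`λ_R(R)` of the natural-extension domain.) -/
theorem stmt11 (β a₁ a₂ : ℝ) (hβ1 : 1 < β) (hβ3 : β < 3)
    (ha₁ : 0 < a₁) (h12 : a₁ < a₂) (hc : condition6 β a₁ a₂) :
    Summable (fun n : ℕ => (kappa β a₁ a₂ (n + 1) : ℝ) * a₁ ^ 2 / β ^ (n + 1)) ∧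
    Summable (fun n : ℕ => (kappa β a₁ a₂ (n + 1) : ℝ) / β ^ (n + 1)) := by
  have hβ : 0 < β := by linarith
  have h2 : a₂ < 2 * a₁ := by
    have := hc.2.trans_le (mul_le_mul_of_nonneg_left (min_le_left 2 β) ha₁.le)
    linarith
  have h4 : a₂ < a₁ * β := hc.2.trans_le (mul_le_mul_of_nonneg_left (min_le_right 2 β) ha₁.le)
  have h3 : a₁ * (β - 1) < a₂ :=
    (mul_le_mul_of_nonneg_left (le_max_left (β - 1) 1) ha₁.le).trans_lt hc.1
  have main : Summable (fun n : ℕ => (kappa β a₁ a₂ (n + 1) : ℝ) / β ^ (n + 1)) := by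
    let A : ℕ → ℝ := fun n => ((levelG β a₁ a₂ n).card : ℝ) / β ^ n
    let L : ℕ → ℝ := fun n => (∑ r ∈ levelG β a₁ a₂ n, tLen β a₁ a₂ r / a₁) / β ^ n
    have hA : ∀ n, 0 ≤ A n := fun n => by positivity
    have hL : ∀ n, 0 ≤ L n := fun n => div_nonneg (Finset.sum_nonneg fun r hr =>
      div_nonneg (level_pos β a₁ a₂ ha₁ n r hr).le ha₁.le) (by positivity)
    have hstep : ∀ n, A (n + 1) + L (n + 1) ≤ A n / β + L n := by
      intro n
      have h := level_ineq β a₁ a₂ hβ1 ha₁ h12 h2 h3 n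
      have h' := div_le_div_of_nonneg_right h (show 0 ≤ β ^ (n + 1) by positivity)
      rw [add_div, add_div] at h'
      have e1 : ((levelG β a₁ a₂ n).card : ℝ) / β ^ (n + 1) = A n / β := by
        simp only [A]; rw [pow_succ, div_div]
      have e2 : (β * ∑ r ∈ levelG β a₁ a₂ n, tLen β a₁ a₂ r / a₁) / β ^ (n + 1) = L n := by
        simp only [L]; rw [pow_succ, mul_comm β, mul_div_mul_right _ _ hβ.ne']
      rw [e1, e2] at h'
      exact h'
    have hsum : ∀ N, (1 - 1 / β) * ∑ i ∈ Finset.range N, A i + A N + L N ≤ A 0 + L 0 := by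
      intro N
      induction N with
      | zero => simp
      | succ N ih =>
        rw [Finset.sum_range_succ]
        have h := hstep N
        have e : (1 - 1 / β) * (∑ i ∈ Finset.range N, A i + A N) =
          (1 - 1 / β) * ∑ i ∈ Finset.range N, A i + A N - A N / β := by ring
        rw [e]; linarith
    have hq : 0 < 1 - 1 / β := by
      rw [sub_pos, div_lt_one hβ]; exact hβ1
    have hAs : Summable A := by
      refine summable_of_sum_range_le (c := (A 0 + L 0) / (1 - 1 / β)) hA fun N => ?_
      rw [le_div_iff₀ hq, mul_comm]
      linarith [hsum N, hA N, hL N]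
    refine Summable.of_nonneg_of_le (fun n => by positivity) (fun n => ?_)
      ((summable_nat_add_iff 1).2 hAs)
    have hk : (kappa β a₁ a₂ (n + 1) : ℝ) ≤ (levelG β a₁ a₂ (n + 1)).card := by
      exact_mod_cast kappa_le β a₁ a₂ hβ1 ha₁ h12 h2 h3 h4 n
    exact div_le_div_of_nonneg_right hk (by positivity)
  refine ⟨?_, main⟩
  refine (main.mul_right (a₁ ^ 2)).congr fun n => ?_
  ring
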